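/- Let (W,S) be a Coxeter system with S finite. If (s,w) and (s,w') are two simple bases with the same core s and the same support, then w = w'. -/

import Mathlib

variable {B : Type*} {W : Type*} [Group W] {M : CoxeterMatrix B}

/-- A subset `J` of the index set is *spherical* if the corresponding simple reflections
generate a finite subgroup. -/
def Spherical (cs : CoxeterSystem M W) (J : Set B) : Prop :=
  (Subgroup.closure (cs.simple '' J) : Set W).Finite

/-- Two indices are *adjacent* if the corresponding simple reflections generate a finite
subgroup. -/
def Adjacent (cs : CoxeterSystem M W) (i j : B) : Prop :=
  (Subgroup.closure {cs.simple i, cs.simple j} : Set W).Finite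

/-- A subset is *2-spherical* if every pair of its elements is adjacent. -/
def TwoSpherical (cs : CoxeterSystem M W) (J : Set B) : Prop :=
  ∀ i ∈ J, ∀ j ∈ J, Adjacent cs i j

/-- A subset is *irreducible* if it cannot be partitioned into two nonempty subsets whose
corresponding simple reflections commute elementwise. -/
def IrreducibleSubset (cs : CoxeterSystem M W) (J : Set B) : Prop :=
  ¬ ∃ K L : Set B, K.Nonempty ∧ L.Nonempty ∧ Disjoint K L ∧ K ∪ L = J ∧
      ∀ k ∈ K, ∀ l ∈ L, Commute (cs.simple k) (cs.simple l)

/-- `perpIn cs T J` is the set `J⊥` of elements of `T ∖ J` whose simple reflections commute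
with those of every element of `J`. -/
def perpIn (cs : CoxeterSystem M W) (T J : Set B) : Set B :=
  {i ∈ T \ J | ∀ j ∈ J, Commute (cs.simple i) (cs.simple j)}

/-- A subset `T` of the index set is *connected* if any two of its elements are joined by a
path inside `T` whose edges are adjacent pairs. -/
def ConnectedIn (cs : CoxeterSystem M W) (T : Set B) : Prop :=
  ∀ a ∈ T, ∀ b ∈ T,
    Relation.ReflTransGen (fun x y => x ∈ T ∧ y ∈ T ∧ Adjacent cs x y) a b

/-- A subset `T` is *twist-rigid* if for every irreducible spherical subset `L ⊆ T` the set
`T ∖ (L ∪ L⊥)` is connected, where `L⊥` is taken inside `T`. -/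
def TwistRigidIn (cs : CoxeterSystem M W) (T : Set B) : Prop :=
  ∀ L ⊆ T, IrreducibleSubset cs L → Spherical cs L →
    ConnectedIn cs (T \ (L ∪ perpIn cs T L))

/-- A pair `(s, w)` is a *base* if `ℓ(w⁻¹ s w) = 2 ℓ(w) + 1` and every reflection `t` with
`ℓ(t w) < ℓ(w)` generates together with `s` a finite subgroup. -/
def IsBase (cs : CoxeterSystem M W) (s : B) (w : W) : Prop :=
  cs.length (w⁻¹ * cs.simple s * w) = 2 * cs.length w + 1 ∧
    ∀ t : W, cs.IsReflection t → cs.length (t * w) < cs.length w →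
      (Subgroup.closure {cs.simple s, t} : Set W).Finite

/-- `J` is the *support* of `(s, w)` if it is the smallest subset of the index set containing
`s` with `w ∈ W_J`. -/
def IsSupport (cs : CoxeterSystem M W) (s : B) (w : W) (J : Set B) : Prop :=
  s ∈ J ∧ w ∈ Subgroup.closure (cs.simple '' J) ∧
    ∀ J' : Set B, s ∈ J' → w ∈ Subgroup.closure (cs.simple '' J') → J ⊆ J'

/-- A base `(s, w)` is *simple* if `w` is represented by a reduced word whose letters are
pairwise distinct and distinct from `s`. -/
def IsSimpleBase (cs : CoxeterSystem M W) (s : B) (w : W) : Prop :=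
  IsBase cs s w ∧ ∃ l : List B, w = cs.wordProd l ∧ cs.length w = l.length ∧
    l.Nodup ∧ s ∉ l

/-- The *shadow* of a base `(s, w)` with support `J`: the set of `j ∈ J` with
`ℓ((wj)⁻¹ s (wj)) ≤ ℓ(w⁻¹ s w)`. -/
def shadow (cs : CoxeterSystem M W) (s : B) (w : W) (J : Set B) : Set B :=
  {j ∈ J | cs.length ((w * cs.simple j)⁻¹ * cs.simple s * (w * cs.simple j)) ≤
    cs.length (w⁻¹ * cs.simple s * w)}

/-!
Two simple bases with the same core and support give words `l` and `l'` in the same letters, none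
of them `s`.

* Each letter of such a word is joined in the Coxeter graph to `s` or to an earlier letter:
  otherwise it commutes with the conjugate of `s` by the preceding letters, and conjugating by it
  does not add `2` to the length.
* No letter `k` is joined to two of them. Let `p` be the word before `k` and let `β` be the image
  of the simple root of `k` under `p`. In the geometric representation, normalized so that roots
  satisfy `⟨α, α⟩ = 2`, the image of the simple root of `s` under `p⁻¹` has coordinates at least `1`
  on `s` and the letters of `p`, so two neighbors would force `⟨αₛ, β⟩ ≤ -2`. Then the product of
  `s` with the reflection `p k p⁻¹` has infinite order, contradicting the second condition on
  a base.

Now let `k` be the last letter of `l`. In `l'` it comes after its unique neighbor among `s` and the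
other letters, so it commutes with everything behind it and can be moved to the end of `l'`; delete
it from both words and induct.
-/

open Module Polynomial.Chebyshev

section Reflection

theorem reflection_mul_reflection_sq_eq_one {R V : Type*} [CommRing R] [AddCommGroup V]
    [Module R V] {x y : V} {f g : Dual R V} (hf : f x = 2) (hg : g y = 2)
    (hfy : f y = 0) (hgx : g x = 0) : (reflection hf * reflection hg) ^ 2 = 1 := by
  ext v
  simp only [pow_two, LinearEquiv.mul_apply, reflection_apply, map_sub, map_smul, hf, hg, hfy, hgx,
    LinearEquiv.coe_one, id]
  module

theorem sin_two_mul_pi_div_ne_zero {m : ℕ} (hm : 3 ≤ m) :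
    Real.sin (2 * (Real.pi / m)) ≠ 0 := by
  have hm' : (3 : ℝ) ≤ m := by exact_mod_cast hm
  have hθ : Real.pi / m ≤ Real.pi / 3 := by gcongr
  exact (Real.sin_pos_of_pos_of_lt_pi (by positivity) (by linarith [Real.pi_pos])).ne'

theorem chebyshevS_eval_eq_zero_of_even {m k : ℕ} (hm : 3 ≤ m) (hk : m = 2 * k) :
    (S ℝ ((k : ℤ) - 1)).eval (2 * Real.cos (2 * (Real.pi / m))) = 0 := by
  have hangle : (((k : ℤ) - 1 : ℤ) + 1 : ℝ) * (2 * (Real.pi / m)) = Real.pi := by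
    have : (m : ℝ) ≠ 0 := by positivity
    field_simp
    simp [hk, mul_comm]
  have hS := S_two_mul_real_cos (2 * (Real.pi / m)) (k - 1)
  rw [hangle, Real.sin_pi] at hS
  exact (mul_eq_zero.1 hS).resolve_right (sin_two_mul_pi_div_ne_zero hm)

theorem chebyshevS_eval_add_eval_eq_zero_of_odd {m k : ℕ} (hm : 3 ≤ m) (hk : m = 2 * k + 1) :
    (S ℝ (k : ℤ)).eval (2 * Real.cos (2 * (Real.pi / m))) +
      (S ℝ ((k : ℤ) - 1)).eval (2 * Real.cos (2 * (Real.pi / m))) = 0 := by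
  have hmθ : (2 * k + 1) * (Real.pi / m) = Real.pi := by
    have : (m : ℝ) ≠ 0 := by positivity
    field_simp
    simp [hk]
  set θ := Real.pi / m
  have hSk := S_two_mul_real_cos (2 * θ) k
  have hSk' := S_two_mul_real_cos (2 * θ) (k - 1)
  have hangle : (((k : ℤ) : ℝ) + 1) * (2 * θ) = θ + Real.pi := by
    push_cast
    linear_combination hmθ
  have hangle' : (((k : ℤ) - 1 : ℤ) + 1 : ℝ) * (2 * θ) = Real.pi - θ := by
    push_cast
    linear_combination hmθ
  rw [hangle, Real.sin_add_pi] at hSk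
  rw [hangle', Real.sin_pi_sub] at hSk'
  refine (mul_eq_zero.1 ?_).resolve_right (sin_two_mul_pi_div_ne_zero hm)
  rw [add_mul, hSk, hSk', neg_add_cancel]

theorem reflection_mul_reflection_pow_eq_one {V : Type*} [AddCommGroup V] [Module ℝ V] {x y : V}
    {f g : Dual ℝ V} (hf : f x = 2) (hg : g y = 2) {m : ℕ} (hm : 3 ≤ m)
    (h : f y * g x = 4 * Real.cos (Real.pi / m) ^ 2) :
    (reflection hf * reflection hg) ^ m = 1 := by
  have ht : 2 * Real.cos (2 * (Real.pi / m)) = f y * g x - 2 := by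
    rw [h, Real.cos_two_mul]
    ring
  ext v
  rw [reflection_mul_reflection_pow_apply hf hg m v _ ht]
  rcases Nat.even_or_odd' m with ⟨k, hk | hk⟩
  · have h1 : ((m : ℤ) - 1) / 2 = k - 1 := by omega
    have h2 : ((m : ℤ) - 2) / 2 = k - 1 := by omega
    simp [h1, h2, chebyshevS_eval_eq_zero_of_even hm hk]
  · have h0 : (m : ℤ) / 2 = k := by omega
    have h1 : ((m : ℤ) - 1) / 2 = k := by omega
    have h2 : ((m : ℤ) - 2) / 2 = k - 1 := by omega
    have h3 : ((m : ℤ) - 3) / 2 = k - 1 := by omega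
    simp [h0, h1, h2, h3, chebyshevS_eval_add_eval_eq_zero_of_odd hm hk]

section LinearOrder

variable {R : Type*} [CommRing R] [LinearOrder R] [IsStrictOrderedRing R]

theorem chebyshevS_eval_pos {t : R} (ht : 2 ≤ t) (n : ℕ) : 0 < (S R n).eval t := by
  suffices h : 1 ≤ (S R n).eval t ∧ (S R n).eval t ≤ (S R (n + 1)).eval t from
    zero_lt_one.trans_le h.1
  induction n with
  | zero => simpa using one_le_two.trans ht
  | succ n ih =>
    push_cast
    refine ⟨ih.1.trans ih.2, ?_⟩
    rw [add_assoc, one_add_one_eq_two, S_add_two]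
    simp only [Polynomial.eval_sub, Polynomial.eval_mul, Polynomial.eval_X]
    nlinarith

theorem not_isOfFinOrder_reflection_mul_reflection {V : Type*} [AddCommGroup V] [Module R V]
    {x y : V} {f g : Dual R V} (hf : f x = 2)
    (hg : g y = 2) (hxy : LinearIndependent R ![x, y]) (h : 4 ≤ f y * g x) :
    ¬ IsOfFinOrder (reflection hf * reflection hg) := by
  rw [isOfFinOrder_iff_pow_eq_one]
  rintro ⟨_ | n, hpos, hn⟩
  · exact hpos.false
  have hx := DFunLike.congr_fun hn x
  rw [reflection_mul_reflection_pow_apply_self hf hg, LinearEquiv.coe_one, id] at hx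
  push_cast at hx
  rw [add_sub_cancel_right] at hx
  set t := f y * g x - 2
  have hcoeff : (S R n).eval t * -g x = 0 :=
    (LinearIndependent.pair_iff.1 hxy ((S R (n + 1)).eval t + (S R n).eval t - 1) _
      (by rw [sub_smul, one_smul, sub_add_eq_add_sub, hx, sub_self])).2
  rcases mul_eq_zero.1 hcoeff with h0 | h0
  · exact (chebyshevS_eval_pos (by linarith) n).ne' h0
  · rw [neg_eq_zero.1 h0, mul_zero] at h
    norm_num at h

end LinearOrder

end Reflection

section CoxeterForm

variable (M)

/-- The entry `-2 cos (π / M i j)` of the Gram matrix of twice the usual Coxeter form. When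
`M i j = 0`, which encodes infinite order, `π / 0 = 0` gives the intended value `-2`. -/
noncomputable def coxeterGram (i j : B) : ℝ := -2 * Real.cos (Real.pi / M i j)

theorem coxeterGram_comm (i j : B) : coxeterGram M i j = coxeterGram M j i := by
  rw [coxeterGram, M.symmetric, coxeterGram]

@[simp]
theorem coxeterGram_self (i : B) : coxeterGram M i i = 2 := by
  simp [coxeterGram]

variable {M}

theorem three_le_coxeterMatrix {i j : B} (hij : i ≠ j) (h0 : M i j ≠ 0) (h2 : M i j ≠ 2) :
    3 ≤ M i j := by
  have := M.off_diagonal i j hij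
  omega

theorem coxeterGram_eq_zero {i j : B} (h : M i j = 2) : coxeterGram M i j = 0 := by
  simp [coxeterGram, h]

theorem coxeterGram_le_neg_one {i j : B} (hij : i ≠ j) (h2 : M i j ≠ 2) :
    coxeterGram M i j ≤ -1 := by
  suffices h : 1 / 2 ≤ Real.cos (Real.pi / M i j) by
    rw [coxeterGram]
    linarith
  by_cases h0 : M i j = 0
  · norm_num [h0]
  · have h3 : (3 : ℝ) ≤ M i j := by exact_mod_cast three_le_coxeterMatrix hij h0 h2
    rw [← Real.cos_pi_div_three]
    exact Real.cos_le_cos_of_nonneg_of_le_pi (by positivity) (by linarith [Real.pi_pos])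
      (by gcongr)

theorem coxeterGram_nonpos {i j : B} (hij : i ≠ j) : coxeterGram M i j ≤ 0 := by
  by_cases h2 : M i j = 2
  · exact (coxeterGram_eq_zero h2).le
  · linarith [coxeterGram_le_neg_one hij h2]

variable (M)

/-- Twice the Coxeter bilinear form, so that every root `α` satisfies `⟨α, α⟩ = 2`, on the space
`B →₀ ℝ` whose standard basis vectors are the simple roots. -/
noncomputable def coxeterForm : LinearMap.BilinForm ℝ (B →₀ ℝ) :=
  Finsupp.linearCombination ℝ fun i => Finsupp.linearCombination ℝ (coxeterGram M i)

/-- The simple root indexed by `i`. -/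
noncomputable abbrev simpleRoot (i : B) : B →₀ ℝ := Finsupp.single i 1

theorem coxeterForm_simpleRoot_left (i : B) (v : B →₀ ℝ) :
    coxeterForm M (simpleRoot i) v = v.sum fun j a => a * coxeterGram M i j := by
  simp [coxeterForm, Finsupp.linearCombination_apply]

@[simp]
theorem coxeterForm_simpleRoot_simpleRoot (i j : B) :
    coxeterForm M (simpleRoot i) (simpleRoot j) = coxeterGram M i j := by
  simp [coxeterForm_simpleRoot_left]

theorem coxeterForm_simpleRoot_self (i : B) :
    coxeterForm M (simpleRoot i) (simpleRoot i) = 2 := by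
  simp

theorem coxeterForm_comm (u v : B →₀ ℝ) : coxeterForm M u v = coxeterForm M v u := by
  suffices h : coxeterForm M = (coxeterForm M).flip from LinearMap.congr_fun₂ h u v
  ext i j
  simpa using coxeterGram_comm M i j

theorem coxeterForm_simpleRoot_le_neg_card {k : B} {v : B →₀ ℝ} (hk : v k = 0)
    (hv : ∀ x, 0 ≤ v x) (T : Finset B) (hT : ∀ x ∈ T, 1 ≤ v x ∧ M x k ≠ 2) :
    coxeterForm M (simpleRoot k) v ≤ -T.card := by
  have hne {x : B} (hx : v x ≠ 0) : k ≠ x := by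
    rintro rfl
    exact hx hk
  have hTne {x : B} (hx : x ∈ T) : v x ≠ 0 := by linarith [(hT x hx).1]
  have hsub : T ⊆ v.support := fun x hx => Finsupp.mem_support_iff.2 (hTne hx)
  rw [coxeterForm_simpleRoot_left, Finsupp.sum]
  calc ∑ x ∈ v.support, v x * coxeterGram M k x
      ≤ ∑ x ∈ T, v x * coxeterGram M k x :=
        Finset.sum_le_sum_of_subset_of_nonpos' hsub fun x hx _ =>
          mul_nonpos_of_nonneg_of_nonpos (hv x)
            (coxeterGram_nonpos (hne (Finsupp.mem_support_iff.1 hx)))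
    _ ≤ ∑ _x ∈ T, (-1 : ℝ) := Finset.sum_le_sum fun x hx => by
        have hgram : coxeterGram M k x ≤ -1 :=
          coxeterGram_le_neg_one (hne (hTne hx)) (M.symmetric x k ▸ (hT x hx).2)
        nlinarith [(hT x hx).1]
    _ = -T.card := by simp

/-- The action of a simple generator in the geometric representation. -/
noncomputable def simpleReflection (i : B) : (B →₀ ℝ) ≃ₗ[ℝ] (B →₀ ℝ) :=
  reflection (coxeterForm_simpleRoot_self M i)

theorem simpleReflection_apply (i : B) (v : B →₀ ℝ) :
    simpleReflection M i v = v - coxeterForm M (simpleRoot i) v • simpleRoot i :=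
  reflection_apply ..

@[simp]
theorem simpleReflection_simpleRoot_self (i : B) :
    simpleReflection M i (simpleRoot i) = -simpleRoot i :=
  reflection_apply_self _

theorem simpleReflection_apply_of_ne {i k : B} (h : k ≠ i) (v : B →₀ ℝ) :
    simpleReflection M i v k = v k := by
  simp [simpleReflection_apply, Finsupp.single_eq_of_ne h]

theorem coxeterForm_simpleReflection_simpleReflection (i : B) (u v : B →₀ ℝ) :
    coxeterForm M (simpleReflection M i u) (simpleReflection M i v) = coxeterForm M u v := by
  simp only [simpleReflection_apply, map_sub, map_smul, LinearMap.sub_apply, LinearMap.smul_apply,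
    smul_eq_mul, coxeterForm_simpleRoot_self, coxeterForm_comm M u (simpleRoot i)]
  ring

theorem isLiftable_simpleReflection : M.IsLiftable (simpleReflection M) := by
  intro i j
  by_cases hij : i = j
  · subst hij
    rw [M.diagonal, pow_one]
    ext1 v
    exact involutive_reflection (coxeterForm_simpleRoot_self M i) v
  by_cases h0 : M i j = 0
  · rw [h0, pow_zero]
  by_cases h2 : M i j = 2
  · rw [h2]
    apply reflection_mul_reflection_sq_eq_one <;>
      simp [coxeterGram_eq_zero, h2, M.symmetric j i]
  · apply reflection_mul_reflection_pow_eq_one _ _ (three_le_coxeterMatrix hij h0 h2)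
    simp only [coxeterForm_simpleRoot_simpleRoot, coxeterGram, M.symmetric j i]
    ring

end CoxeterForm

section GeometricRep

variable (cs : CoxeterSystem M W)

/-- The geometric representation of a Coxeter group, in which each simple generator acts by
reflection in its simple root. -/
noncomputable def geometricRep : W →* ((B →₀ ℝ) ≃ₗ[ℝ] (B →₀ ℝ)) :=
  cs.lift ⟨simpleReflection M, isLiftable_simpleReflection M⟩

@[simp]
theorem geometricRep_simple (i : B) : geometricRep cs (cs.simple i) = simpleReflection M i :=
  cs.lift_apply_simple _ i

theorem geometricRep_mul_apply (w w' : W) (v : B →₀ ℝ) :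
    geometricRep cs (w * w') v = geometricRep cs w (geometricRep cs w' v) := by
  rw [map_mul, LinearEquiv.mul_apply]

@[simp]
theorem geometricRep_geometricRep_inv (w : W) (v : B →₀ ℝ) :
    geometricRep cs w (geometricRep cs w⁻¹ v) = v := by
  rw [← geometricRep_mul_apply, mul_inv_cancel, map_one, LinearEquiv.coe_one, id]

theorem coxeterForm_geometricRep_geometricRep (w : W) (u v : B →₀ ℝ) :
    coxeterForm M (geometricRep cs w u) (geometricRep cs w v) = coxeterForm M u v := by
  induction w using cs.simple_induction_left with
  | one => simp
  | mul_simple_left w i ih =>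
    simp only [geometricRep_mul_apply, geometricRep_simple,
      coxeterForm_simpleReflection_simpleReflection, ih]

theorem coxeterForm_geometricRep_right (w : W) (u v : B →₀ ℝ) :
    coxeterForm M u (geometricRep cs w v) = coxeterForm M (geometricRep cs w⁻¹ u) v := by
  rw [← coxeterForm_geometricRep_geometricRep cs w (geometricRep cs w⁻¹ u),
    geometricRep_geometricRep_inv]

theorem coxeterForm_geometricRep_simpleRoot_self (w : W) (i : B) :
    coxeterForm M (geometricRep cs w (simpleRoot i)) (geometricRep cs w (simpleRoot i)) = 2 := by
  rw [coxeterForm_geometricRep_geometricRep, coxeterForm_simpleRoot_self]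

theorem geometricRep_conj_simple (w : W) (i : B) :
    geometricRep cs (w * cs.simple i * w⁻¹) =
      reflection (coxeterForm_geometricRep_simpleRoot_self cs w i) := by
  ext1 v
  rw [geometricRep_mul_apply, geometricRep_mul_apply, geometricRep_simple, simpleReflection_apply,
    map_sub, map_smul, geometricRep_geometricRep_inv, reflection_apply, coxeterForm_comm,
    ← coxeterForm_geometricRep_right, coxeterForm_comm]

theorem not_isOfFinOrder_simple_mul_conj_simple {i j : B} {w : W}
    (hli : LinearIndependent ℝ ![simpleRoot i, geometricRep cs w (simpleRoot j)])
    (h : coxeterForm M (simpleRoot i) (geometricRep cs w (simpleRoot j)) ≤ -2) :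
    ¬ IsOfFinOrder (cs.simple i * (w * cs.simple j * w⁻¹)) := by
  intro hfin
  have hfin' := (geometricRep cs).isOfFinOrder hfin
  rw [map_mul, geometricRep_simple, geometricRep_conj_simple] at hfin'
  refine not_isOfFinOrder_reflection_mul_reflection _ _ hli ?_ hfin'
  rw [coxeterForm_comm M _ (simpleRoot i)]
  nlinarith

end GeometricRep

section Parabolic

variable (cs : CoxeterSystem M W)

theorem geometricRep_apply_of_mem_closure {J : Set B} {k : B} (hk : k ∉ J) {w : W}
    (hw : w ∈ Subgroup.closure (cs.simple '' J)) (v : B →₀ ℝ) :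
    geometricRep cs w v k = v k := by
  induction hw using Subgroup.closure_induction generalizing v with
  | mem _ hx =>
    obtain ⟨j, hj, rfl⟩ := hx
    rw [geometricRep_simple, simpleReflection_apply_of_ne M (ne_of_mem_of_not_mem hj hk).symm]
  | one => simp
  | mul x y _ _ hx hy => rw [geometricRep_mul_apply, hx, hy]
  | inv x _ hx => rw [← hx, geometricRep_geometricRep_inv]

theorem mem_of_simple_mem_closure {J : Set B} {k : B}
    (h : cs.simple k ∈ Subgroup.closure (cs.simple '' J)) : k ∈ J := by
  by_contra hk
  have hcoord := geometricRep_apply_of_mem_closure cs hk h (simpleRoot k)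
  norm_num at hcoord

theorem wordProd_mem_closure {J : Set B} {l : List B} (hl : ∀ j ∈ l, j ∈ J) :
    cs.wordProd l ∈ Subgroup.closure (cs.simple '' J) := by
  refine Subgroup.list_prod_mem _ fun x hx => ?_
  obtain ⟨j, hj, rfl⟩ := List.mem_map.1 hx
  exact Subgroup.subset_closure ⟨j, hl j hj, rfl⟩

theorem mem_of_wordProd_mem_closure {J : Set B} {k : B} {l : List B} (hl : l.Nodup) (hk : k ∈ l)
    (hw : cs.wordProd l ∈ Subgroup.closure (cs.simple '' J)) : k ∈ J := by
  by_contra hkJ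
  obtain ⟨p, q, rfl⟩ := List.append_of_mem hk
  obtain ⟨hkpq, -⟩ := List.nodup_cons.1 (List.nodup_middle.1 hl)
  have hp : cs.wordProd p ∈ Subgroup.closure (cs.simple '' {k}ᶜ) :=
    wordProd_mem_closure cs fun j hj => by rintro rfl; simp [hj] at hkpq
  have hq : cs.wordProd q ∈ Subgroup.closure (cs.simple '' {k}ᶜ) :=
    wordProd_mem_closure cs fun j hj => by rintro rfl; simp [hj] at hkpq
  have hw' := Subgroup.closure_mono (Set.image_mono (Set.subset_compl_singleton_iff.2 hkJ)) hw
  have hsimple : cs.simple k =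
      (cs.wordProd p)⁻¹ * cs.wordProd (p ++ k :: q) * (cs.wordProd q)⁻¹ := by
    simp [cs.wordProd_append, cs.wordProd_cons, mul_assoc]
  refine mem_of_simple_mem_closure cs (J := {k}ᶜ) ?_ rfl
  rw [hsimple]
  exact mul_mem (mul_mem (inv_mem hp) hw') (inv_mem hq)

variable {cs} in
theorem IsSupport.eq_of_nodup {s : B} {l : List B} {J : Set B}
    (hJ : IsSupport cs s (cs.wordProd l) J) (hl : l.Nodup) : J = {x | x ∈ s :: l} := by
  refine (hJ.2.2 _ List.mem_cons_self
    (wordProd_mem_closure cs fun _ => List.mem_cons_of_mem s)).antisymm fun x hx => ?_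
  rcases List.mem_cons.1 hx with rfl | hx
  · exact hJ.1
  · exact mem_of_wordProd_mem_closure cs hl hx hJ.2.1

end Parabolic

section EarlierNeighbors

variable (M) in
/-- Every letter of the word `l` is joined in the Coxeter graph to `s` or to an earlier letter. The
graph is encoded by `M x k ≠ 2`, which is only used for `x ≠ k`. -/
def EarlierNeighborExists (s : B) (l : List B) : Prop :=
  ∀ p k, p ++ [k] <+: l → ∃ x ∈ s :: p, M x k ≠ 2

variable (M) in
/-- Every letter of the word `l` is joined in the Coxeter graph to at most one element among `s`
and the earlier letters. -/
def EarlierNeighborUnique (s : B) (l : List B) : Prop :=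
  ∀ p k, p ++ [k] <+: l → {x | x ∈ s :: p ∧ M x k ≠ 2}.Subsingleton

variable {s k : B} {l p q : List B}

theorem forall_prefix_concat_iff {P : List B → B → Prop} :
    (∀ q j, q ++ [j] <+: p ++ [k] → P q j) ↔ (∀ q j, q ++ [j] <+: p → P q j) ∧ P p k := by
  simp only [List.prefix_concat_iff, List.append_singleton_inj]
  refine ⟨fun h => ⟨fun q j hq => h q j (.inr hq), h p k (.inl ⟨rfl, rfl⟩)⟩, ?_⟩
  rintro ⟨h, hk⟩ q j (⟨rfl, rfl⟩ | hq)
  exacts [hk, h q j hq]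

theorem earlierNeighborExists_concat :
    EarlierNeighborExists M s (p ++ [k]) ↔
      EarlierNeighborExists M s p ∧ ∃ x ∈ s :: p, M x k ≠ 2 :=
  forall_prefix_concat_iff

theorem earlierNeighborUnique_concat :
    EarlierNeighborUnique M s (p ++ [k]) ↔
      EarlierNeighborUnique M s p ∧ {x | x ∈ s :: p ∧ M x k ≠ 2}.Subsingleton :=
  forall_prefix_concat_iff

theorem EarlierNeighborExists.append_of_append_cons
    (h : EarlierNeighborExists M s (p ++ k :: q)) (hq : ∀ y ∈ q, M k y = 2) :
    EarlierNeighborExists M s (p ++ q) := by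
  induction q using List.reverseRecOn with
  | nil => simpa using (earlierNeighborExists_concat.1 h).1
  | append_singleton q y ih =>
    rw [← List.cons_append, ← List.append_assoc, earlierNeighborExists_concat] at h
    rw [← List.append_assoc, earlierNeighborExists_concat]
    obtain ⟨hinit, x, hx, hxy⟩ := h
    refine ⟨ih hinit fun z hz => hq z (by simp [hz]), x, ?_, hxy⟩
    have hxk : x ≠ k := by
      rintro rfl
      exact hxy (hq y (by simp))
    grind

theorem commute_simple_simple (cs : CoxeterSystem M W) {i j : B} (h : M i j = 2) :
    Commute (cs.simple i) (cs.simple j) := by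
  have hpow := cs.simple_mul_simple_pow i j
  rw [h, pow_two] at hpow
  simpa [Commute, SemiconjBy] using eq_inv_of_mul_eq_one_left hpow

theorem commute_simple_wordProd (cs : CoxeterSystem M W) (h : ∀ y ∈ l, M k y = 2) :
    Commute (cs.simple k) (cs.wordProd l) := by
  refine Commute.list_prod_right _ _ fun x hx => ?_
  obtain ⟨y, hy, rfl⟩ := List.mem_map.1 hx
  exact commute_simple_simple cs (h y hy)

theorem EarlierNeighborUnique.eq_two_of_mem_right {p' q' : List B}
    (hl : EarlierNeighborUnique M s (p ++ [k])) (hl' : EarlierNeighborExists M s (p' ++ k :: q'))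
    (hperm : p.Perm (p' ++ q')) (hnd : (s :: p).Nodup) : ∀ y ∈ q', M k y = 2 := by
  intro y hy
  by_contra hky
  obtain ⟨x, hx, hxk⟩ := hl' p' k (by simp)
  have hnd' : (s :: (p' ++ q')).Nodup := (hperm.cons s).nodup hnd
  have hxp : x ∈ s :: p := (hperm.cons s).symm.subset (by grind)
  have hyp : y ∈ s :: p := (hperm.cons s).symm.subset (by grind)
  have hxy : x = y :=
    (earlierNeighborUnique_concat.1 hl).2 ⟨hxp, hxk⟩ ⟨hyp, M.symmetric k y ▸ hky⟩
  -- The only neighbor of `k` lies in `s :: p'` by the choice of `x`, but `y` lies in `q'`.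
  subst hxy
  grind

theorem EarlierNeighborUnique.wordProd_eq (cs : CoxeterSystem M W) {l' : List B}
    (hl : EarlierNeighborUnique M s l) (hl' : EarlierNeighborExists M s l') (hperm : l.Perm l')
    (hnd : (s :: l).Nodup) : cs.wordProd l = cs.wordProd l' := by
  induction l using List.reverseRecOn generalizing l' with
  | nil => rw [hperm.nil_eq]
  | append_singleton p k ih =>
    obtain ⟨p', q', rfl⟩ := List.append_of_mem (hperm.subset (by simp : k ∈ p ++ [k]))
    have hperm' : p.Perm (p' ++ q') :=
      (List.perm_cons k).1 ((List.perm_append_singleton k p).symm.trans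
        (hperm.trans List.perm_middle))
    have hnd' : (s :: p).Nodup := hnd.sublist (by simp)
    have hcomm := hl.eq_two_of_mem_right hl' hperm' hnd'
    calc cs.wordProd (p ++ [k])
        = cs.wordProd (p' ++ q') * cs.simple k := by
          rw [cs.wordProd_append, cs.wordProd_singleton,
            ih (earlierNeighborUnique_concat.1 hl).1 (hl'.append_of_append_cons hcomm) hperm' hnd']
      _ = cs.wordProd (p' ++ k :: q') := by
          rw [cs.wordProd_append, cs.wordProd_append, cs.wordProd_cons, mul_assoc,
            (commute_simple_wordProd cs hcomm).eq]

end EarlierNeighbors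

section Base

variable (cs : CoxeterSystem M W) {s k : B} {l : List B}

theorem earlierNeighborExists_of_le_length_conj
    (h : 2 * l.length + 1 ≤ cs.length ((cs.wordProd l)⁻¹ * cs.simple s * cs.wordProd l)) :
    EarlierNeighborExists M s l := by
  induction l using List.reverseRecOn with
  | nil => simp [EarlierNeighborExists]
  | append_singleton p k ih =>
    set c := (cs.wordProd p)⁻¹ * cs.simple s * cs.wordProd p with hc
    have hconj : (cs.wordProd (p ++ [k]))⁻¹ * cs.simple s * cs.wordProd (p ++ [k]) =
        cs.simple k * c * cs.simple k := by
      simp [hc, cs.wordProd_append, mul_assoc]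
    have hle : cs.length c ≤ 2 * p.length + 1 := by
      have hword : cs.wordProd (p.reverse ++ s :: p) = c := by
        simp [hc, cs.wordProd_append, cs.wordProd_cons, mul_assoc]
      have hword_le := cs.length_wordProd_le (p.reverse ++ s :: p)
      rw [hword, List.length_append, List.length_reverse, List.length_cons] at hword_le
      omega
    have hle' : cs.length (cs.simple k * c * cs.simple k) ≤ cs.length c + 2 := by
      have hright := cs.length_mul_le (cs.simple k * c) (cs.simple k)
      have hleft := cs.length_mul_le (cs.simple k) c
      rw [cs.length_simple] at hright hleft
      omega
    rw [hconj, List.length_append, List.length_singleton] at h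
    refine earlierNeighborExists_concat.2 ⟨ih (by omega), ?_⟩
    by_contra! hp
    have hM {y : B} (hy : y ∈ s :: p) : M k y = 2 := M.symmetric y k ▸ hp y hy
    have hks : Commute (cs.simple k) (cs.simple s) :=
      commute_simple_simple cs (hM List.mem_cons_self)
    have hkp : Commute (cs.simple k) (cs.wordProd p) :=
      commute_simple_wordProd cs fun y hy => hM (List.mem_cons_of_mem s hy)
    have hkc : Commute (cs.simple k) c := (hkp.inv_right.mul_right hks).mul_right hkp
    rw [hkc.eq, cs.simple_mul_simple_cancel_right] at h
    omega

theorem geometricRep_inv_simpleRoot_apply_of_notMem {x : B} (hx : x ∉ s :: l) :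
    geometricRep cs (cs.wordProd l)⁻¹ (simpleRoot s) x = 0 := by
  obtain ⟨hxs, hxl⟩ := (List.mem_cons.not.trans not_or).1 hx
  have hmem : (cs.wordProd l)⁻¹ ∈ Subgroup.closure (cs.simple '' {j | j ∈ l}) :=
    inv_mem (wordProd_mem_closure cs fun _ => id)
  rw [geometricRep_apply_of_mem_closure cs hxl hmem, Finsupp.single_eq_of_ne hxs]

theorem coxeterForm_geometricRep_inv_le_neg_card
    (hone : ∀ x ∈ s :: l, 1 ≤ geometricRep cs (cs.wordProd l)⁻¹ (simpleRoot s) x)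
    (hk : k ∉ s :: l) (T : Finset B) (hT : ∀ x ∈ T, x ∈ s :: l ∧ M x k ≠ 2) :
    coxeterForm M (simpleRoot k) (geometricRep cs (cs.wordProd l)⁻¹ (simpleRoot s)) ≤ -T.card := by
  refine coxeterForm_simpleRoot_le_neg_card M (geometricRep_inv_simpleRoot_apply_of_notMem cs hk)
    (fun x => ?_) T fun x hx => ⟨hone x (hT x hx).1, (hT x hx).2⟩
  by_cases hx : x ∈ s :: l
  · exact zero_le_one.trans (hone x hx)
  · exact (geometricRep_inv_simpleRoot_apply_of_notMem cs hx).ge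

theorem one_le_geometricRep_inv_simpleRoot_apply (hl : EarlierNeighborExists M s l)
    (hnd : (s :: l).Nodup) :
    ∀ x ∈ s :: l, 1 ≤ geometricRep cs (cs.wordProd l)⁻¹ (simpleRoot s) x := by
  induction l using List.reverseRecOn with
  | nil => simp
  | append_singleton p k ih =>
    obtain ⟨hp, y, hy, hyk⟩ := earlierNeighborExists_concat.1 hl
    have hone := ih hp (hnd.sublist (by simp))
    have hk : k ∉ s :: p := by grind
    have hform := coxeterForm_geometricRep_inv_le_neg_card cs hone hk {y} (by grind)
    intro x hx
    rw [cs.wordProd_append, cs.wordProd_singleton, mul_inv_rev, cs.inv_simple,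
      geometricRep_mul_apply, geometricRep_simple]
    by_cases hxk : x = k
    · subst hxk
      rw [Finset.card_singleton, Nat.cast_one] at hform
      rw [simpleReflection_apply, Finsupp.sub_apply, Finsupp.smul_apply, Finsupp.single_eq_same,
        geometricRep_inv_simpleRoot_apply_of_notMem cs hk, smul_eq_mul]
      linarith
    · rw [simpleReflection_apply_of_ne M hxk]
      exact hone x (by grind)

theorem linearIndependent_simpleRoot_geometricRep (hk : k ∉ s :: l) (hs : s ∉ l) :
    LinearIndependent ℝ ![simpleRoot s, geometricRep cs (cs.wordProd l) (simpleRoot k)] := by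
  obtain ⟨hks, hkl⟩ := (List.mem_cons.not.trans not_or).1 hk
  have hmem : cs.wordProd l ∈ Subgroup.closure (cs.simple '' {j | j ∈ l}) :=
    wordProd_mem_closure cs fun _ => id
  refine LinearIndependent.pair_iff.2 fun a b hab => ?_
  have hcoord_s : geometricRep cs (cs.wordProd l) (simpleRoot k) s = 0 := by
    rw [geometricRep_apply_of_mem_closure cs hs hmem, Finsupp.single_eq_of_ne (Ne.symm hks)]
  have hcoord_k : geometricRep cs (cs.wordProd l) (simpleRoot k) k = 1 := by
    rw [geometricRep_apply_of_mem_closure cs hkl hmem, Finsupp.single_eq_same]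
  exact ⟨by simpa [hcoord_s] using DFunLike.congr_fun hab s,
    by simpa [hcoord_k, Finsupp.single_eq_of_ne hks] using DFunLike.congr_fun hab k⟩

theorem subsingleton_neighbors_of_isOfFinOrder (hl : EarlierNeighborExists M s l)
    (hnd : (s :: (l ++ [k])).Nodup)
    (hfin : IsOfFinOrder (cs.simple s * (cs.wordProd l * cs.simple k * (cs.wordProd l)⁻¹))) :
    {x | x ∈ s :: l ∧ M x k ≠ 2}.Subsingleton := by
  classical
  intro x hx y hy
  by_contra hxy
  have hk : k ∉ s :: l := by grind
  have hnd' : (s :: l).Nodup := hnd.sublist (by simp)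
  refine not_isOfFinOrder_simple_mul_conj_simple cs
    (linearIndependent_simpleRoot_geometricRep cs hk (List.nodup_cons.1 hnd').1) ?_ hfin
  rw [coxeterForm_geometricRep_right, coxeterForm_comm]
  have hone := one_le_geometricRep_inv_simpleRoot_apply cs hl hnd'
  simpa [Finset.card_pair hxy] using
    coxeterForm_geometricRep_inv_le_neg_card cs hone hk {x, y} (by grind)

theorem earlierNeighborUnique_of_isOfFinOrder (hl : EarlierNeighborExists M s l)
    (hnd : (s :: l).Nodup) (hfin : ∀ t ∈ cs.leftInvSeq l, IsOfFinOrder (cs.simple s * t)) :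
    EarlierNeighborUnique M s l := by
  induction l using List.reverseRecOn with
  | nil => simp [EarlierNeighborUnique]
  | append_singleton p k ih =>
    have hp := (earlierNeighborExists_concat.1 hl).1
    rw [← List.concat_eq_append, cs.leftInvSeq_concat, List.concat_eq_append] at hfin
    exact earlierNeighborUnique_concat.2
      ⟨ih hp (hnd.sublist (by simp)) fun t ht => hfin t (List.mem_append_left _ ht),
        subsingleton_neighbors_of_isOfFinOrder cs hp hnd (hfin _ List.mem_concat_self)⟩

variable {cs} in
theorem IsBase.isOfFinOrder {t : W} (h : IsBase cs s (cs.wordProd l))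
    (hl : cs.IsReduced l) (ht : t ∈ cs.leftInvSeq l) : IsOfFinOrder (cs.simple s * t) := by
  obtain ⟨hrefl, hlt⟩ := cs.isLeftInversion_of_mem_leftInvSeq hl ht
  have : Finite (Subgroup.closure {cs.simple s, t}) := h.2 t hrefl hlt
  have hst : cs.simple s * t ∈ Subgroup.closure {cs.simple s, t} :=
    mul_mem (Subgroup.subset_closure (.inl rfl)) (Subgroup.subset_closure (.inr rfl))
  exact Submonoid.isOfFinOrder_coe.2
    (isOfFinOrder_of_finite (⟨_, hst⟩ : Subgroup.closure {cs.simple s, t}))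

end Base

theorem simple_base_unique_general (cs : CoxeterSystem M W) (s : B) (w : W)
    (h : IsSimpleBase cs s w) (l' : List B) (hnd' : l'.Nodup) (hs' : s ∉ l')
    (hlen' : cs.length ((cs.wordProd l')⁻¹ * cs.simple s * cs.wordProd l') = 2 * l'.length + 1)
    (J : Set B) (hJ : IsSupport cs s w J) (hJ' : IsSupport cs s (cs.wordProd l') J) :
    w = cs.wordProd l' := by
  obtain ⟨hbase, l, rfl, hred, hnd, hs⟩ := h
  have hnds : (s :: l).Nodup := List.nodup_cons.2 ⟨hs, hnd⟩
  have hnds' : (s :: l').Nodup := List.nodup_cons.2 ⟨hs', hnd'⟩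
  have hsupp : {x | x ∈ s :: l} = {x | x ∈ s :: l'} :=
    (hJ.eq_of_nodup hnd).symm.trans (hJ'.eq_of_nodup hnd')
  have hperm : l.Perm l' :=
    ((List.perm_ext_iff_of_nodup hnds hnds').2 (Set.ext_iff.1 hsupp)).cons_inv
  have hexists : EarlierNeighborExists M s l :=
    earlierNeighborExists_of_le_length_conj cs (hred ▸ hbase.1.ge)
  have hunique : EarlierNeighborUnique M s l :=
    earlierNeighborUnique_of_isOfFinOrder cs hexists hnds fun _ => hbase.isOfFinOrder hred
  exact hunique.wordProd_eq cs (earlierNeighborExists_of_le_length_conj cs hlen'.ge) hperm hnds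

/-- Two simple bases with common core and common support are equal. -/
theorem simple_base_unique
    [Finite B] (cs : CoxeterSystem M W) (s : B) (w w' : W)
    (h : IsSimpleBase cs s w) (h' : IsSimpleBase cs s w')
    (J : Set B) (hJ : IsSupport cs s w J) (hJ' : IsSupport cs s w' J) :
    w = w' := by
  obtain ⟨⟨hconj, -⟩, l', rfl, hlen, hnd, hs⟩ := h'
  exact simple_base_unique_general cs s w h l' hnd hs (hlen ▸ hconj) J hJ hJ'
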